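/- arXiv:1701.06451 — 2 statements merged into one kernel-verified Lean document; each statement's English description precedes it below -/
import Mathlib

section
/- Let H be a regular 3-partite 3-graph (i.e., every vertex has the same positive degree) with n vertices in each vertex class. Then H has a matching of size at least n/2. -/
/-!
This is Füredi's argument, run for `k`-partite `k`-graphs. Take an extreme point `w` of the polytope
of fractional matchings at which the total weight is largest. If every weight were below
`1 / (k - 1)`, every saturated vertex would lie on at least `k` edges of the support, so the
saturated vertices would be at most as many as the support edges, with equality only if every vertex
of the support is saturated. In that case the loads at the saturated vertices are linearly
dependent, because the loads of each class add up to the total weight. Either way some nonzero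
weighting of the support has zero load at every saturated vertex, and `w` could be moved both ways
along it, contrary to extremality. So some edge `e` has weight at least `1 / (k - 1)`. The edges
meeting `e` carry total weight at most `k - 1`: put `e` in the matching, discard them, and induct.
For a 3-partite 3-graph of maximum degree `r`, giving each edge the weight `1 / r` yields a matching
of size at least half the total weight.
-/

namespace Tripartite

/-- The degree of a vertex `a` in the first class of a 3-partite 3-multihypergraph,
whose edges are given as a multiset of triples (so parallel edges are allowed). -/
def deg1 {α β γ : Type*} [DecidableEq α] (H : Multiset (α × β × γ)) (a : α) : ℕ :=
  (H.filter fun e => e.1 = a).card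

/-- The degree of a vertex `b` in the second class. -/
def deg2 {α β γ : Type*} [DecidableEq β] (H : Multiset (α × β × γ)) (b : β) : ℕ :=
  (H.filter fun e => e.2.1 = b).card

/-- The degree of a vertex `c` in the third class. -/
def deg3 {α β γ : Type*} [DecidableEq γ] (H : Multiset (α × β × γ)) (c : γ) : ℕ :=
  (H.filter fun e => e.2.2 = c).card

/-- `H` is `r`-regular: every vertex of every class has degree exactly `r`. -/
def IsRegular {α β γ : Type*} [DecidableEq α] [DecidableEq β] [DecidableEq γ]
    (H : Multiset (α × β × γ)) (r : ℕ) : Prop :=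
  (∀ a, deg1 H a = r) ∧ (∀ b, deg2 H b = r) ∧ (∀ c, deg3 H c = r)

/-- A matching of `H`: a set of edges of `H` that are pairwise disjoint. -/
def IsMatching {α β γ : Type*} (H : Multiset (α × β × γ)) (M : Finset (α × β × γ)) : Prop :=
  (∀ e ∈ M, e ∈ H) ∧
  ∀ e ∈ M, ∀ f ∈ M, e ≠ f → e.1 ≠ f.1 ∧ e.2.1 ≠ f.2.1 ∧ e.2.2 ≠ f.2.2

/-- The matching number ν(H): the maximum size of a matching of `H`. -/
noncomputable def matchNum {α β γ : Type*} (H : Multiset (α × β × γ)) : ℕ :=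
  sSup {k | ∃ M : Finset (α × β × γ), IsMatching H M ∧ M.card = k}

section ExtremePoints

open Filter Topology

variable {W : Type*} [AddCommGroup W] [Module ℝ W] {K : Set W}

lemma exists_mem_extremePoints_forall_le [TopologicalSpace W] [IsTopologicalAddGroup W] [T2Space W]
    [ContinuousSMul ℝ W] [LocallyConvexSpace ℝ W] (hK : IsCompact K) (hne : K.Nonempty)
    (l : W →L[ℝ] ℝ) : ∃ w ∈ K.extremePoints ℝ, ∀ u ∈ K, l u ≤ l w := by
  obtain ⟨v, hv, hvmax⟩ := hK.exists_isMaxOn hne l.continuous.continuousOn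
  have hface : IsExposed ℝ K (l.toExposed K) := ContinuousLinearMap.toExposed.isExposed
  obtain ⟨w, hw⟩ := (hface.isCompact hK).extremePoints_nonempty ⟨v, hv, hvmax⟩
  exact ⟨w, hface.isExtreme.extremePoints_subset_extremePoints hw, hw.1.2⟩

lemma eq_zero_of_eventually_add_smul_mem {w y : W} (hw : w ∈ K.extremePoints ℝ)
    (hy : ∀ᶠ t : ℝ in 𝓝 0, w + t • y ∈ K) : y = 0 := by
  have hneg : ∀ᶠ t : ℝ in 𝓝 0, w + (-t) • y ∈ K := by
    have hneg_zero : Tendsto (fun t : ℝ => -t) (𝓝 0) (𝓝 0) := by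
      simpa using (continuous_neg (G := ℝ)).tendsto 0
    exact hneg_zero.eventually hy
  obtain ⟨t, ⟨hplus, hminus⟩, ht⟩ :=
    (((hy.and hneg).filter_mono nhdsWithin_le_nhds).and
      (self_mem_nhdsWithin : Set.Ioi (0 : ℝ) ∈ 𝓝[>] 0)).exists
  have hmid : w ∈ openSegment ℝ (w + t • y) (w + (-t) • y) :=
    ⟨1 / 2, 1 / 2, by norm_num, by norm_num, by norm_num, by module⟩
  have hty : t • y = 0 := by simpa using hw.2 hplus hminus hmid
  exact (smul_eq_zero.1 hty).resolve_left (ne_of_gt ht)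

end ExtremePoints

section DoubleCounting

open Finset

variable {ι V E : Type*} [Fintype ι] [DecidableEq V] {x : E → ι → V}
  {D : Finset E} {S : Finset (ι × V)}

lemma sum_card_filter_eq_sum_card_filter_mem [DecidableEq ι] (x : E → ι → V)
    (D : Finset E) (S : Finset (ι × V)) :
    ∑ p ∈ S, #{e ∈ D | x e p.1 = p.2} = ∑ e ∈ D, #{i | (i, x e i) ∈ S} := by
  have hswap : ∑ p ∈ S, #{e ∈ D | x e p.1 = p.2} = ∑ e ∈ D, #{p ∈ S | x e p.1 = p.2} :=
    sum_card_bipartiteAbove_eq_sum_card_bipartiteBelow _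
  rw [hswap]
  refine sum_congr rfl fun e _ => (card_nbij' (fun i => (i, x e i)) Prod.fst ?_ ?_ ?_ ?_).symm
  · intro i hi
    simpa using hi
  · rintro ⟨i, v⟩ hp
    obtain ⟨hS, rfl⟩ : (i, v) ∈ S ∧ x e i = v := by simpa using hp
    simpa using hS
  · intro i _
    rfl
  · rintro ⟨i, v⟩ hp
    obtain ⟨-, rfl⟩ : (i, v) ∈ S ∧ x e i = v := by simpa using hp
    rfl

lemma card_mul_le_sum_card_filter_mem [DecidableEq ι]
    (hS : ∀ p ∈ S, Fintype.card ι ≤ #{e ∈ D | x e p.1 = p.2}) :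
    #S * Fintype.card ι ≤ ∑ e ∈ D, #{i | (i, x e i) ∈ S} := by
  rw [← sum_card_filter_eq_sum_card_filter_mem]
  exact card_nsmul_le_sum S _ _ hS

lemma card_le_card_of_card_le_degree [Nonempty ι]
    (hS : ∀ p ∈ S, Fintype.card ι ≤ #{e ∈ D | x e p.1 = p.2}) : #S ≤ #D := by
  classical
  refine Nat.le_of_mul_le_mul_right ?_ (Fintype.card_pos (α := ι))
  exact (card_mul_le_sum_card_filter_mem hS).trans
    (sum_le_card_nsmul D _ _ fun e _ => card_le_univ _)

lemma mem_of_card_le_degree_of_card_le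
    (hS : ∀ p ∈ S, Fintype.card ι ≤ #{e ∈ D | x e p.1 = p.2}) (hDS : #D ≤ #S) {e : E}
    (he : e ∈ D) (i : ι) : (i, x e i) ∈ S := by
  classical
  by_contra hi
  have hlt : #{j | (j, x e j) ∈ S} < Fintype.card ι := card_lt_univ_of_notMem (by simpa using hi)
  refine absurd (card_mul_le_sum_card_filter_mem hS) (not_le.2 ?_)
  calc ∑ f ∈ D, #{j | (j, x f j) ∈ S}
      < ∑ _f ∈ D, Fintype.card ι := sum_lt_sum (fun f _ => card_le_univ _) ⟨e, he, hlt⟩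
    _ ≤ #S * Fintype.card ι := by
        rw [sum_const, smul_eq_mul]
        exact Nat.mul_le_mul_right _ hDS

end DoubleCounting

section FractionalMatchings

open Finset Filter Topology

variable {ι V E : Type*} [Fintype E] [DecidableEq V] {x : E → ι → V} {w : E → ℝ}

/-- The load of a vertex under an edge weighting. A multipartite hypergraph is given by its edge
labels `E` and the map `x` sending an edge and a class to the vertex of the edge in that class;
the pair `(i, v)` stands for the vertex `v` of the class `i`. -/
def load (x : E → ι → V) (p : ι × V) : (E → ℝ) →ₗ[ℝ] ℝ :=
  ∑ e with x e p.1 = p.2, LinearMap.proj e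

lemma load_apply (p : ι × V) : load x p w = ∑ e with x e p.1 = p.2, w e := by
  simp [load]

lemma sum_load_image (x : E → ι → V) (w : E → ℝ) (i : ι) :
    ∑ v ∈ univ.image fun e => x e i, load x (i, v) w = ∑ e, w e := by
  simp only [load_apply]
  exact sum_fiberwise_of_maps_to (fun e he => mem_image_of_mem _ he) w

lemma le_load (hw : ∀ e, 0 ≤ w e) (e : E) (i : ι) : w e ≤ load x (i, x e i) w := by
  rw [load_apply]
  exact single_le_sum (fun f _ => hw f) (by simp)

lemma sum_load_edge [Fintype ι] (e : E) :
    ∑ i, load x (i, x e i) w = ∑ f, (#{i | x f i = x e i} : ℝ) * w f := by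
  simp_rw [load_apply, sum_filter]
  rw [sum_comm]
  simp [← sum_filter]

lemma sum_meeting_add_le [Fintype ι] [Nonempty ι] (hw : ∀ e, 0 ≤ w e) (e : E)
    (hload : ∀ i, load x (i, x e i) w ≤ 1) :
    ∑ f with ∃ i, x f i = x e i, w f + (Fintype.card ι - 1) * w e ≤ Fintype.card ι := by
  classical
  have hterm : ∀ f, (if ∃ i, x f i = x e i then w f else 0)
      + (if f = e then (Fintype.card ι - 1) * w e else 0) ≤ #{i | x f i = x e i} * w f := by
    intro f
    by_cases hfe : f = e
    · subst hfe
      have hall : (#{i | x f i = x f i} : ℝ) = Fintype.card ι := by simp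
      rw [if_pos ⟨Classical.arbitrary ι, rfl⟩, if_pos rfl, hall]
      linarith
    by_cases hmeet : ∃ i, x f i = x e i
    · obtain ⟨i, hi⟩ := hmeet
      have hcard : (1 : ℝ) ≤ #{i | x f i = x e i} := by
        exact_mod_cast card_pos.2 ⟨i, by simpa using hi⟩
      rw [if_pos ⟨i, hi⟩, if_neg hfe, add_zero]
      exact le_mul_of_one_le_left (hw f) hcard
    · rw [if_neg hmeet, if_neg hfe, add_zero]
      exact mul_nonneg (Nat.cast_nonneg _) (hw f)
  calc ∑ f with ∃ i, x f i = x e i, w f + (Fintype.card ι - 1) * w e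
      = ∑ f, ((if ∃ i, x f i = x e i then w f else 0)
          + if f = e then (Fintype.card ι - 1) * w e else 0) := by
        simp [sum_add_distrib, sum_filter]
    _ ≤ ∑ f, #{i | x f i = x e i} * w f := sum_le_sum fun f _ => hterm f
    _ = ∑ i, load x (i, x e i) w := (sum_load_edge e).symm
    _ ≤ Fintype.card ι := by simpa using sum_le_card_nsmul univ _ 1 fun i _ => hload i

lemma exists_load_ne_ite [DecidableEq ι] [Nontrivial ι] (y : E → ℝ) (e : E) (i : ι) :
    ∃ p, load x p y ≠ if p = (i, x e i) then 1 else 0 := by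
  by_contra! hload
  obtain ⟨j, hji⟩ := exists_ne i
  have htotal_i : ∑ f, y f = 1 := by simp [← sum_load_image x y i, hload]
  have htotal_j : ∑ f, y f = 0 := by simp [← sum_load_image x y j, hload, hji]
  exact one_ne_zero (htotal_i.symm.trans htotal_j)

lemma exists_ne_zero_load_eq_zero [Fintype ι] [Nontrivial ι] {D : Finset E} (hD : D.Nonempty)
    {S : Finset (ι × V)} (hS : ∀ p ∈ S, Fintype.card ι ≤ #{e ∈ D | x e p.1 = p.2}) :
    ∃ y : E → ℝ, y ≠ 0 ∧ (∀ e ∉ D, y e = 0) ∧ ∀ p ∈ S, load x p y = 0 := by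
  classical
  -- The second component vanishes exactly on the weightings supported in `D`, so that `E → ℝ` can
  -- serve as the domain and nothing has to be extended by zero.
  let L : (E → ℝ) →ₗ[ℝ] (S → ℝ) × (↥Dᶜ → ℝ) :=
    (LinearMap.pi fun p : S => load x p).prod (LinearMap.funLeft ℝ ℝ Subtype.val)
  by_contra! hindep
  have hinj : Function.Injective L := by
    rw [injective_iff_map_eq_zero]
    intro y hy
    obtain ⟨hyS, hyD⟩ := Prod.ext_iff.1 hy
    by_contra hy0
    obtain ⟨p, hp, hpy⟩ := hindep y hy0 fun e he => congrFun hyD ⟨e, mem_compl.2 he⟩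
    exact hpy (congrFun hyS ⟨p, hp⟩)
  have hdim : Fintype.card E ≤ #S + (Fintype.card E - #D) := by
    simpa using LinearMap.finrank_le_finrank_of_injective hinj
  have hDE : #D ≤ Fintype.card E := card_le_univ D
  have hSD : #S ≤ #D := card_le_card_of_card_le_degree hS
  have hmem : ∀ e ∈ D, ∀ i, (i, x e i) ∈ S := fun e he i =>
    mem_of_card_le_degree_of_card_le hS (by omega) he i
  have hfinrank : Module.finrank ℝ (E → ℝ) = Module.finrank ℝ ((S → ℝ) × (↥Dᶜ → ℝ)) := by
    simp only [Module.finrank_prod, Module.finrank_pi, Fintype.card_coe, card_compl]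
    omega
  have hsurj : Function.Surjective L :=
    (LinearMap.injective_iff_surjective_of_finrank_eq_finrank hfinrank).1 hinj
  obtain ⟨e, he⟩ := hD
  let i : ι := Classical.arbitrary ι
  obtain ⟨y, hy⟩ := hsurj (Pi.single ⟨(i, x e i), hmem e he i⟩ 1, 0)
  obtain ⟨hyS, hyD⟩ := Prod.ext_iff.1 hy
  have hload : ∀ p, load x p y = if p = (i, x e i) then 1 else 0 := by
    intro p
    by_cases hp : p ∈ S
    · simpa [L, Pi.single_apply] using congrFun hyS ⟨p, hp⟩
    · rw [if_neg (by rintro rfl; exact hp (hmem e he i)), load_apply]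
      refine sum_eq_zero fun f hf => congrFun hyD ⟨f, mem_compl.2 fun hfD => hp ?_⟩
      have hpf : (p.1, x f p.1) = p := Prod.ext rfl (mem_filter.1 hf).2
      exact hpf ▸ hmem f hfD p.1
  obtain ⟨p, hp⟩ := exists_load_ne_ite (x := x) y e i
  exact hp (hload p)

lemma card_le_degree_of_load_eq_one {k : ℕ} {D : Finset E} (hD : ∀ e ∉ D, w e = 0)
    (hw : ∀ e, (k - 1) * w e < 1) {p : ι × V} (hp : load x p w = 1) :
    k ≤ #{e ∈ D | x e p.1 = p.2} := by
  have hsum : ∑ e ∈ D with x e p.1 = p.2, w e = 1 := by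
    rw [← hp, load_apply, sum_filter, sum_filter]
    exact sum_subset (subset_univ D) fun e _ he => by simp [hD e he]
  have hne : {e ∈ D | x e p.1 = p.2}.Nonempty := nonempty_of_sum_ne_zero (hsum ▸ one_ne_zero)
  have hlt : (k - 1 : ℝ) < #{e ∈ D | x e p.1 = p.2} := by
    calc (k - 1 : ℝ) = ∑ e ∈ D with x e p.1 = p.2, (k - 1) * w e := by
          rw [← mul_sum, hsum, mul_one]
      _ < ∑ e ∈ D with x e p.1 = p.2, 1 := sum_lt_sum_of_nonempty hne fun e _ => hw e
      _ = #{e ∈ D | x e p.1 = p.2} := by simp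
  have hcast : (k : ℝ) < (#{e ∈ D | x e p.1 = p.2} + 1 : ℕ) := by
    push_cast
    linarith
  exact Nat.lt_succ_iff.1 (Nat.cast_lt.1 hcast)

/-- The polytope of fractional matchings of the edges in `F`, as weightings of all edges that vanish
off `F`. -/
def fractionalMatchings (x : E → ι → V) (F : Finset E) : Set (E → ℝ) :=
  {w | (∀ e, 0 ≤ w e) ∧ (∀ e ∉ F, w e = 0) ∧ ∀ e i, load x (i, x e i) w ≤ 1}

lemma continuous_load (p : ι × V) : Continuous (load x p) :=
  LinearMap.continuous_of_finiteDimensional _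

lemma isCompact_fractionalMatchings [Nonempty ι] (x : E → ι → V) (F : Finset E) :
    IsCompact (fractionalMatchings x F) := by
  have hclosed : IsClosed (fractionalMatchings x F) := by
    simp only [fractionalMatchings, Set.ofPred_and, Set.ofPred_forall]
    refine (isClosed_iInter fun e => ?_).inter ((isClosed_iInter fun e => isClosed_iInter fun _ =>
      ?_).inter (isClosed_iInter fun e => isClosed_iInter fun i => ?_))
    · exact isClosed_le continuous_const (continuous_apply e)
    · exact isClosed_eq (continuous_apply e) continuous_const
    · exact isClosed_le (continuous_load _) continuous_const
  refine (isCompact_univ_pi fun _ => isCompact_Icc (a := (0 : ℝ)) (b := 1)).of_isClosed_subset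
    hclosed fun w hw e _ => ⟨hw.1 e, ?_⟩
  exact (le_load hw.1 e (Classical.arbitrary ι)).trans (hw.2.2 e _)

lemma eventually_add_smul_mem_fractionalMatchings [Finite ι] {F : Finset E}
    (hw : w ∈ fractionalMatchings x F) {y : E → ℝ} (hsupp : ∀ e, w e = 0 → y e = 0)
    (hload : ∀ e i, load x (i, x e i) w = 1 → load x (i, x e i) y = 0) :
    ∀ᶠ t : ℝ in 𝓝 0, w + t • y ∈ fractionalMatchings x F := by
  have htendsto : Tendsto (fun t : ℝ => w + t • y) (𝓝 0) (𝓝 w) := by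
    have hcont : Continuous fun t : ℝ => w + t • y := by fun_prop
    simpa using hcont.tendsto 0
  have hnonneg : ∀ e, ∀ᶠ t : ℝ in 𝓝 0, 0 ≤ (w + t • y) e := by
    intro e
    rcases (hw.1 e).eq_or_lt with he | he
    · simp [← he, hsupp e he.symm]
    · exact (((continuous_apply e).tendsto w).comp htendsto).eventually (le_mem_nhds he)
  have hle : ∀ e i, ∀ᶠ t : ℝ in 𝓝 0, load x (i, x e i) (w + t • y) ≤ 1 := by
    intro e i
    rcases (hw.2.2 e i).eq_or_lt with he | he
    · simp [he, hload e i he]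
    · exact (((continuous_load _).tendsto w).comp htendsto).eventually (ge_mem_nhds he)
  filter_upwards [eventually_all.2 hnonneg, eventually_all.2 fun e => eventually_all.2 (hle e)]
    with t htnonneg htle
  exact ⟨htnonneg, fun e he => by simp [hw.2.1 e he, hsupp e (hw.2.1 e he)], htle⟩

lemma exists_one_le_of_mem_extremePoints [Fintype ι] [Nontrivial ι] {F : Finset E}
    (hw : w ∈ (fractionalMatchings x F).extremePoints ℝ) (hw0 : w ≠ 0) :
    ∃ e, 1 ≤ (Fintype.card ι - 1) * w e := by
  classical
  by_contra! hlt
  obtain ⟨e, he⟩ := Function.ne_iff.1 hw0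
  let D : Finset E := {e | w e ≠ 0}
  let S : Finset (ι × V) :=
    {p ∈ univ.image fun q : E × ι => (q.2, x q.1 q.2) | load x p w = 1}
  have hS : ∀ p ∈ S, Fintype.card ι ≤ #{e ∈ D | x e p.1 = p.2} := fun p hp =>
    card_le_degree_of_load_eq_one (by simp [D]) hlt (mem_filter.1 hp).2
  obtain ⟨y, hy0, hyD, hyS⟩ := exists_ne_zero_load_eq_zero ⟨e, by simpa [D] using he⟩ hS
  refine hy0 (eq_zero_of_eventually_add_smul_mem hw ?_)
  refine eventually_add_smul_mem_fractionalMatchings hw.1 (fun e he => hyD e (by simp [D, he])) ?_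
  exact fun e i hei => hyS _ (mem_filter.2 ⟨mem_image.2 ⟨(e, i), mem_univ _, rfl⟩, hei⟩)

lemma ite_mem_fractionalMatchings {F : Finset E} (hw : w ∈ fractionalMatchings x F) (p : E → Prop)
    [DecidablePred p] :
    (fun e => if p e then w e else 0) ∈ fractionalMatchings x {e ∈ F | p e} := by
  have hle : ∀ e, (if p e then w e else 0) ≤ w e := fun e => by
    split_ifs
    exacts [le_rfl, hw.1 e]
  refine ⟨fun e => by dsimp only; split_ifs; exacts [hw.1 e, le_rfl], fun e he => ?_,
    fun e i => ?_⟩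
  · by_cases hp : p e
    · simp [hp, hw.2.1 e fun heF => he (mem_filter.2 ⟨heF, hp⟩)]
    · simp [hp]
  · refine le_trans ?_ (hw.2.2 e i)
    simp only [load_apply]
    exact sum_le_sum fun f _ => hle f

/-- Füredi's bound `ν* ≤ (k - 1) ν` for `k`-partite `k`-graphs. -/
theorem exists_matching_of_mem_fractionalMatchings [Fintype ι] [Nontrivial ι] (F : Finset E)
    {w : E → ℝ} (hw : w ∈ fractionalMatchings x F) :
    ∃ M ⊆ F, (M : Set E).Pairwise (fun e f => ∀ i, x e i ≠ x f i) ∧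
      ∑ e, w e ≤ (Fintype.card ι - 1) * #M := by
  classical
  induction F using Finset.strongInduction generalizing w with
  | H F ih =>
  obtain ⟨u, hu, humax⟩ := exists_mem_extremePoints_forall_le (isCompact_fractionalMatchings x F)
    ⟨w, hw⟩ (∑ e, ContinuousLinearMap.proj e)
  have hwu : ∑ e, w e ≤ ∑ e, u e := by simpa using humax w hw
  by_cases hu0 : u = 0
  · exact ⟨∅, by simp, by simp, by simpa [hu0] using hwu⟩
  obtain ⟨e, he⟩ := exists_one_le_of_mem_extremePoints hu hu0
  have heF : e ∈ F := by
    by_contra heF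
    rw [hu.1.2.1 e heF, mul_zero] at he
    exact zero_lt_one.not_ge he
  have hss : {f ∈ F | ∀ i, x f i ≠ x e i} ⊂ F :=
    filter_ssubset.2 ⟨e, heF, fun h => h (Classical.arbitrary ι) rfl⟩
  obtain ⟨M, hM, hpair, hsum⟩ := ih _ hss (ite_mem_fractionalMatchings hu.1 _)
  have hMe : ∀ f ∈ M, ∀ i, x f i ≠ x e i := fun f hf => (mem_filter.1 (hM hf)).2
  have heM : e ∉ M := fun h => hMe e h (Classical.arbitrary ι) rfl
  refine ⟨insert e M, insert_subset heF (hM.trans (filter_subset _ _)), ?_, hwu.trans ?_⟩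
  · rw [coe_insert, Set.pairwise_insert_of_notMem (mod_cast heM)]
    exact ⟨hpair, fun f hf => ⟨fun i => (hMe f hf i).symm, hMe f hf⟩⟩
  have hmeet := sum_meeting_add_le hu.1.1 e (hu.1.2.2 e)
  have hsplit := sum_filter_add_sum_filter_not univ (fun f => ∃ i, x f i = x e i) u
  simp only [not_exists, ← ne_eq] at hsplit
  rw [← sum_filter] at hsum
  rw [card_insert_of_notMem heM]
  push_cast
  linarith

end FractionalMatchings

section ThreePartite

open Finset

variable {α β γ : Type*} {H : Multiset (α × β × γ)}

lemma IsMatching.card_le_card {M : Finset (α × β × γ)} (hM : IsMatching H M) :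
    #M ≤ Multiset.card H :=
  Multiset.card_le_card ((Multiset.le_iff_subset M.nodup).2 fun e he => hM.1 e he)

lemma IsMatching.card_le_matchNum {M : Finset (α × β × γ)} (hM : IsMatching H M) :
    #M ≤ matchNum H :=
  le_csSup ⟨Multiset.card H, by rintro _ ⟨N, hN, rfl⟩; exact hN.card_le_card⟩ ⟨M, hM, rfl⟩

/-- The vertices of an edge of a 3-partite 3-graph, as a function of the class, with values in the
disjoint union of the three classes. -/
def vertices (e : α × β × γ) : Fin 3 → α ⊕ β ⊕ γ :=
  ![Sum.inl e.1, Sum.inr (Sum.inl e.2.1), Sum.inr (Sum.inr e.2.2)]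

lemma forall_vertices_ne_iff {e f : α × β × γ} :
    (∀ i, vertices e i ≠ vertices f i) ↔ e.1 ≠ f.1 ∧ e.2.1 ≠ f.2.1 ∧ e.2.2 ≠ f.2.2 := by
  simp [vertices, Fin.forall_fin_succ]

lemma card_eq_zero_of_deg1_eq_zero [DecidableEq α] (h : ∀ a, deg1 H a = 0) :
    Multiset.card H = 0 := by
  refine Multiset.card_eq_zero.2 (Multiset.eq_zero_of_forall_notMem fun e he => ?_)
  exact Multiset.filter_eq_nil.1 (Multiset.card_eq_zero.1 (h e.1)) e he rfl

lemma sum_deg1 [Fintype α] [DecidableEq α] (H : Multiset (α × β × γ)) :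
    ∑ a, deg1 H a = Multiset.card H := by
  have hcount : ∀ a, deg1 H a = (H.map Prod.fst).count a := fun a => by
    simp only [deg1, Multiset.count_map, eq_comm]
  simp [hcount]

variable [DecidableEq α] [DecidableEq β] [DecidableEq γ]

lemma isMatching_map_subtype {M : Finset H.toFinset}
    (hM : (M : Set H.toFinset).Pairwise fun e f => ∀ i, vertices e.1 i ≠ vertices f.1 i) :
    IsMatching H (M.map (Function.Embedding.subtype _)) := by
  refine ⟨fun e he => ?_, fun e he f hf hef => ?_⟩
  · obtain ⟨e, -, rfl⟩ := mem_map.1 he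
    exact Multiset.mem_toFinset.1 e.2
  · obtain ⟨e', he', rfl⟩ := mem_map.1 he
    obtain ⟨f', hf', rfl⟩ := mem_map.1 hf
    exact forall_vertices_ne_iff.1 (hM he' hf' fun h => hef (by rw [h]))

lemma sum_count_toFinset_filter {ε : Type*} [DecidableEq ε] (s : Multiset ε) (p : ε → Prop)
    [DecidablePred p] :
    ∑ e : s.toFinset with p e.1, s.count e.1 = Multiset.card (s.filter p) := by
  rw [sum_filter, sum_coe_sort s.toFinset fun e => if p e then s.count e else 0, ← sum_filter,
    ← Multiset.toFinset_filter, ← Multiset.toFinset_sum_count_eq]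
  exact sum_congr rfl fun e he =>
    (Multiset.count_filter_of_pos (Multiset.of_mem_filter (Multiset.mem_toFinset.1 he))).symm

lemma sum_count_filter_vertices_le {r : ℕ} (h1 : ∀ a, deg1 H a ≤ r) (h2 : ∀ b, deg2 H b ≤ r)
    (h3 : ∀ c, deg3 H c ≤ r) (e : α × β × γ) (i : Fin 3) :
    ∑ f : H.toFinset with vertices f.1 i = vertices e i, H.count f.1 ≤ r := by
  rw [sum_count_toFinset_filter H fun f => vertices f i = vertices e i]
  fin_cases i
  · simpa [vertices, deg1] using h1 e.1
  · simpa [vertices, deg2] using h2 e.2.1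
  · simpa [vertices, deg3] using h3 e.2.2

lemma count_div_mem_fractionalMatchings {r : ℕ} (h1 : ∀ a, deg1 H a ≤ r)
    (h2 : ∀ b, deg2 H b ≤ r) (h3 : ∀ c, deg3 H c ≤ r) :
    (fun e : H.toFinset => (H.count e.1 / r : ℝ)) ∈
      fractionalMatchings (fun e : H.toFinset => vertices e.1) univ := by
  refine ⟨fun e => by positivity, by simp, fun e i => ?_⟩
  rw [load_apply, ← sum_div, ← Nat.cast_sum]
  exact div_le_one_of_le₀ (mod_cast sum_count_filter_vertices_le h1 h2 h3 e i) r.cast_nonneg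

theorem stmt0_general {r : ℕ} (h1 : ∀ a, deg1 H a ≤ r) (h2 : ∀ b, deg2 H b ≤ r)
    (h3 : ∀ c, deg3 H c ≤ r) : Multiset.card H ≤ 2 * matchNum H * r := by
  rcases r.eq_zero_or_pos with rfl | hr
  · exact (card_eq_zero_of_deg1_eq_zero fun a => Nat.le_zero.1 (h1 a)).le
  obtain ⟨M, -, hpair, hsum⟩ := exists_matching_of_mem_fractionalMatchings univ
    (count_div_mem_fractionalMatchings h1 h2 h3)
  have hM : #M ≤ matchNum H := by simpa using (isMatching_map_subtype hpair).card_le_matchNum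
  have hweight : ∑ e : H.toFinset, (H.count e.1 / r : ℝ) = Multiset.card H / r := by
    rw [← sum_div, ← Nat.cast_sum, sum_coe_sort H.toFinset fun e => H.count e,
      H.toFinset_sum_count_eq]
  have hcard : (Multiset.card H : ℝ) ≤ 2 * #M * r := by
    have htwo : (Fintype.card (Fin 3) : ℝ) - 1 = 2 := by norm_num
    rwa [hweight, htwo, div_le_iff₀ (mod_cast hr)] at hsum
  exact (mod_cast hcard : Multiset.card H ≤ 2 * #M * r).trans (by gcongr)

end ThreePartite

/-- A regular 3-partite 3-graph of positive degree with `n` vertices in each class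
has a matching of size at least `n / 2`. -/
theorem stmt0 {α β γ : Type*} [Fintype α] [Fintype β] [Fintype γ]
    [DecidableEq α] [DecidableEq β] [DecidableEq γ]
    (H : Multiset (α × β × γ)) (n r : ℕ) (hr : 0 < r) (hreg : IsRegular H r)
    (hA : Fintype.card α = n) (hB : Fintype.card β = n) (hC : Fintype.card γ = n) :
    n ≤ 2 * matchNum H := by
  have hcard : Multiset.card H = n * r := by simp [← sum_deg1, hreg.1, hA]
  refine Nat.le_of_mul_le_mul_right (hcard ▸ stmt0_general ?_ ?_ ?_) hr
  exacts [fun a => (hreg.1 a).le, fun b => (hreg.2.1 b).le, fun c => (hreg.2.2 c).le]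

end Tripartite
end

section
/- Let r ≥ 2 and let H be an r-regular 3-partite 3-graph with n vertices in each vertex class, and let ε ≥ 0. If ν(H) ≤ (1 + ε)·n/2, then H has at least (1 − (22r − 77/3)ε)·n/2 connected components that are copies of (r/2)·F, where F is the truncated Fano plane. -/
namespace Tripartite

/-- The edge multiset of the truncated Fano plane `F` on vertices `x1, y1` (first class),
`x2, y2` (second class), `x3, y3` (third class). -/
def fanoEdges {α β γ : Type*} (x1 y1 : α) (x2 y2 : β) (x3 y3 : γ) :
    Multiset (α × β × γ) :=
  {(x1, x2, x3), (x1, y2, y3), (y1, x2, y3), (y1, y2, x3)}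

/-- The six vertices `x1, y1, x2, y2, x3, y3` span a copy of `s • F` in `H`, i.e. a
subhypergraph in which every edge of the truncated Fano plane appears with
multiplicity (at least) `s`. -/
def IsFanoCopy {α β γ : Type*} (H : Multiset (α × β × γ)) (s : ℕ)
    (x1 y1 : α) (x2 y2 : β) (x3 y3 : γ) : Prop :=
  x1 ≠ y1 ∧ x2 ≠ y2 ∧ x3 ≠ y3 ∧ s • fanoEdges x1 y1 x2 y2 x3 y3 ≤ H

/-- The six vertices `x1, y1, x2, y2, x3, y3` span a connected component of `H` that is a
copy of `s • F`: the multiset of edges of `H` meeting one of these six vertices is exactly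
`s` parallel copies of each of the four edges of the truncated Fano plane. -/
def IsFanoComponent {α β γ : Type*} [DecidableEq α] [DecidableEq β] [DecidableEq γ]
    (H : Multiset (α × β × γ)) (s : ℕ)
    (x1 y1 : α) (x2 y2 : β) (x3 y3 : γ) : Prop :=
  x1 ≠ y1 ∧ x2 ≠ y2 ∧ x3 ≠ y3 ∧
  H.filter (fun e => e.1 = x1 ∨ e.1 = y1 ∨ e.2.1 = x2 ∨ e.2.1 = y2 ∨
      e.2.2 = x3 ∨ e.2.2 = y3)
    = s • fanoEdges x1 y1 x2 y2 x3 y3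

/-!
Let `M` be a maximum matching whose edges have the largest total multiplicity. Call an edge
*pendant* at a vertex of `A ∈ M` if this is its only vertex covered by `M`. Exchanging `A` for two
disjoint edges would enlarge `M`, so pendant edges at two different vertices of `A` share their
vertex in the third class. Hence the numbers `p₁, p₂, p₃` of pendant edges at the vertices of `A`
pairwise sum to at most `r`. If all three are nonzero, then each `pᵢ` counts parallel copies of a
single edge, which could replace `A` in `M`, so `pᵢ` is at most the multiplicity `m(A)`. In all
cases `p₁ + p₂ + p₃ ≤ m(A) + r`, and equality forces `pᵢ = m(A) = r / 2`, so that `A` and its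
pendant edges form a copy of `(r / 2) • F`, which is a component because `H` is `r`-regular.

Every edge of `H` meets `M` in one vertex if it is pendant and in at least two otherwise, and an
edge of `M` in three. Counting these vertices gives `2 |H| + ∑ m(A) ≤ 3 r ν + ∑ (p₁ + p₂ + p₃)`,
and then `2 |H| + ν ≤ 4 r ν + k`, where `k` is the number of edges of `M` for which equality holds.
With `|H| = r n` and `ν ≤ (1 + ε) n / 2` this yields `k ≥ (1 - (4 r - 1) ε) n / 2`.
-/

section Multiset

variable {δ : Type*} {S : Multiset δ} {P Q R : δ → Prop}
  [DecidablePred P] [DecidablePred Q] [DecidablePred R]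

theorem countP_le_countP_of_imp (h : ∀ x ∈ S, P x → Q x) : S.countP P ≤ S.countP Q := by
  induction S using Quotient.inductionOn with | h l =>
  simpa using List.countP_mono_left (l := l) (by simpa using h)

theorem countP_add_countP_le (hPR : ∀ x ∈ S, P x → R x) (hQR : ∀ x ∈ S, Q x → R x)
    (hPQ : ∀ x, P x → ¬ Q x) : S.countP P + S.countP Q ≤ S.countP R := by
  rw [Multiset.countP_eq_countP_filter_add S R P, Multiset.countP_filter, Multiset.countP_filter]
  exact add_le_add (countP_le_countP_of_imp fun x hx hP => ⟨hPR x hx hP, hP⟩)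
    (countP_le_countP_of_imp fun x hx hQ => ⟨hQR x hx hQ, fun hP => hPQ x hP hQ⟩)

theorem sum_countP_eq_sum_map_card {ι : Type*} (s : Finset ι) (P : ι → δ → Prop)
    [∀ i, DecidablePred (P i)] (S : Multiset δ) :
    ∑ i ∈ s, S.countP (P i) = (S.map fun x => (s.filter fun i => P i x).card).sum := by
  induction S using Multiset.induction_on with
  | empty => simp
  | cons x S ih =>
    simp only [Multiset.countP_cons, Finset.sum_add_distrib, ih, Multiset.map_cons,
      Multiset.sum_cons, Finset.card_filter]
    exact add_comm _ _

theorem nsmul_le_of_nodup [DecidableEq δ] {F : Multiset δ} (hF : F.Nodup) {s : ℕ}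
    (h : ∀ x ∈ F, s ≤ S.count x) : s • F ≤ S := by
  refine Multiset.le_iff_count.2 fun x => ?_
  rw [Multiset.count_nsmul]
  by_cases hx : x ∈ F
  · rw [Multiset.count_eq_one_of_mem hF hx, mul_one]
    exact h x hx
  · simp [Multiset.count_eq_zero_of_notMem hx]

theorem count_eq_count_of_le [DecidableEq δ] {F : Multiset δ} (hFS : F ≤ S)
    (hcard : S.countP P ≤ F.countP P) {x : δ} (hx : P x) : S.count x = F.count x := by
  have hfilter : F.filter P = S.filter P :=
    Multiset.eq_of_le_of_card_le (Multiset.filter_le_filter P hFS)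
      (by simpa only [Multiset.countP_eq_card_filter] using hcard)
  rw [← Multiset.count_filter_of_pos hx, ← hfilter, Multiset.count_filter_of_pos hx]

end Multiset

section Hypergraph

variable {α β γ : Type*} {H : Multiset (α × β × γ)} {M : Finset (α × β × γ)}
  {A B u v e f g : α × β × γ} {i j k : Fin 3} {r s : ℕ}

/-- The `i`-th vertex of an edge. Taking values in the disjoint union of the three vertex classes
lets the classes be treated uniformly. -/
def vertex (e : α × β × γ) : Fin 3 → α ⊕ β ⊕ γ :=
  ![.inl e.1, .inr (.inl e.2.1), .inr (.inr e.2.2)]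

theorem vertex_injective : Function.Injective (vertex : α × β × γ → Fin 3 → α ⊕ β ⊕ γ) := by
  intro e f h
  simpa [vertex, Prod.ext_iff] using h

/-- Two edges without a common vertex. -/
def EdgeDisjoint (e f : α × β × γ) : Prop :=
  ∀ i, vertex e i ≠ vertex f i

theorem edgeDisjoint_iff :
    EdgeDisjoint e f ↔ e.1 ≠ f.1 ∧ e.2.1 ≠ f.2.1 ∧ e.2.2 ≠ f.2.2 := by
  simp [EdgeDisjoint, Fin.forall_fin_succ, vertex]

theorem EdgeDisjoint.symm (h : EdgeDisjoint e f) : EdgeDisjoint f e :=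
  fun i => (h i).symm

instance : Std.Symm (EdgeDisjoint : α × β × γ → α × β × γ → Prop) :=
  ⟨fun _ _ => EdgeDisjoint.symm⟩

theorem notMem_of_forall_edgeDisjoint (h : ∀ B ∈ M, EdgeDisjoint e B) : e ∉ M :=
  fun he => h e he 0 rfl

theorem isMatching_iff :
    IsMatching H M ↔ (∀ e ∈ M, e ∈ H) ∧ (M : Set (α × β × γ)).Pairwise EdgeDisjoint := by
  simp only [IsMatching, Set.Pairwise, edgeDisjoint_iff, Finset.mem_coe]

theorem IsMatching.edgeDisjoint (hM : IsMatching H M) (he : e ∈ M) (hf : f ∈ M) (hne : e ≠ f) :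
    EdgeDisjoint e f :=
  (isMatching_iff.1 hM).2 he hf hne

variable (H) in
theorem isGreatest_matchNum :
    IsGreatest {k | ∃ M : Finset (α × β × γ), IsMatching H M ∧ M.card = k} (matchNum H) := by
  classical
  have hbdd : BddAbove {k | ∃ M : Finset (α × β × γ), IsMatching H M ∧ M.card = k} := by
    refine ⟨H.toFinset.card, ?_⟩
    rintro _ ⟨M, hM, rfl⟩
    exact Finset.card_le_card fun e he => Multiset.mem_toFinset.2 (hM.1 e he)
  exact ⟨Nat.sSup_mem ⟨0, ∅, by simp [IsMatching], rfl⟩ hbdd, fun _ hk => le_csSup hbdd hk⟩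

/-- `e` is a pendant edge at the `i`-th vertex of `A`: this is the only vertex of `e` covered by
the matching `M`. -/
def IsPendant (M : Finset (α × β × γ)) (A : α × β × γ) (i : Fin 3) (e : α × β × γ) : Prop :=
  vertex e i = vertex A i ∧ ∀ j ≠ i, ∀ B ∈ M, vertex e j ≠ vertex B j

theorem IsPendant.not_isPendant (hA : A ∈ M) (he : IsPendant M A i e) (hij : i ≠ j) :
    ¬ IsPendant M A j e :=
  fun he' => he.2 j hij.symm A hA he'.1

theorem mem_fanoEdges {x₁ y₁ : α} {x₂ y₂ : β} {x₃ y₃ : γ} :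
    e ∈ fanoEdges x₁ y₁ x₂ y₂ x₃ y₃ ↔
      e = (x₁, x₂, x₃) ∨ e = (x₁, y₂, y₃) ∨ e = (y₁, x₂, y₃) ∨ e = (y₁, y₂, x₃) := by
  simp [fanoEdges]

variable [DecidableEq α] [DecidableEq β] [DecidableEq γ]

instance : DecidablePred (IsPendant M A i) :=
  fun _ => inferInstanceAs (Decidable (_ ∧ _))

theorem IsMatching.insert (hM : IsMatching H M) (he : e ∈ H) (hd : ∀ B ∈ M, EdgeDisjoint e B) :
    IsMatching H (insert e M) := by
  rw [isMatching_iff] at hM ⊢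
  refine ⟨Finset.forall_mem_insert _ _ _ |>.2 ⟨he, hM.1⟩, ?_⟩
  rw [Finset.coe_insert]
  exact hM.2.insert_of_symm fun B hB _ => hd B hB

theorem IsMatching.erase (hM : IsMatching H M) (A : α × β × γ) : IsMatching H (M.erase A) := by
  rw [isMatching_iff] at hM ⊢
  exact ⟨fun e he => hM.1 e (Finset.mem_of_mem_erase he),
    hM.2.mono (Finset.coe_subset.2 (Finset.erase_subset A M))⟩

/-- A maximum matching whose edges have the largest total multiplicity among all maximum
matchings; the extremal object of the proof. -/
structure IsOptimalMatching (H : Multiset (α × β × γ)) (M : Finset (α × β × γ)) : Prop where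
  isMatching : IsMatching H M
  card_eq : M.card = matchNum H
  sum_count_le : ∀ N, IsMatching H N → N.card = M.card →
    ∑ e ∈ N, H.count e ≤ ∑ e ∈ M, H.count e

variable (H) in
theorem exists_isOptimalMatching : ∃ M, IsOptimalMatching H M := by
  classical
  obtain ⟨M₀, hM₀, hcard₀⟩ := (isGreatest_matchNum H).1
  have hmem : ∀ {N}, IsMatching H N → N ∈ H.toFinset.powerset := fun hN =>
    Finset.mem_powerset.2 fun e he => Multiset.mem_toFinset.2 (hN.1 e he)
  obtain ⟨M, hM, hopt⟩ := Finset.exists_max_image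
    (H.toFinset.powerset.filter fun N => IsMatching H N ∧ N.card = matchNum H)
    (fun N => ∑ e ∈ N, H.count e) ⟨M₀, Finset.mem_filter.2 ⟨hmem hM₀, hM₀, hcard₀⟩⟩
  obtain ⟨-, hM, hcard⟩ := Finset.mem_filter.1 hM
  exact ⟨M, hM, hcard, fun N hN hNM =>
    hopt N (Finset.mem_filter.2 ⟨hmem hN, hN, hNM.trans hcard⟩)⟩

namespace IsOptimalMatching

theorem card_le (hM : IsOptimalMatching H M) {N : Finset (α × β × γ)} (hN : IsMatching H N) :
    N.card ≤ M.card :=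
  hM.card_eq ▸ (isGreatest_matchNum H).2 ⟨N, hN, rfl⟩

theorem exists_vertex_eq (hM : IsOptimalMatching H M) (he : e ∈ H) :
    ∃ A ∈ M, ∃ i, vertex e i = vertex A i := by
  by_contra! hd
  have hcard := hM.card_le (hM.isMatching.insert he hd)
  rw [Finset.card_insert_of_notMem (notMem_of_forall_edgeDisjoint hd)] at hcard
  omega

theorem count_le_of_exchange (hM : IsOptimalMatching H M) (hA : A ∈ M) (hf : f ∈ H)
    (hfM : ∀ B ∈ M.erase A, EdgeDisjoint f B) : H.count f ≤ H.count A := by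
  have hnot := notMem_of_forall_edgeDisjoint hfM
  have hsum := hM.sum_count_le _ ((hM.isMatching.erase A).insert hf hfM)
    (by rw [Finset.card_insert_of_notMem hnot, Finset.card_erase_add_one hA])
  rw [Finset.sum_insert hnot, ← Finset.add_sum_erase M _ hA] at hsum
  omega

theorem not_edgeDisjoint_of_exchange (hM : IsOptimalMatching H M) (hA : A ∈ M)
    (hf : f ∈ H) (hg : g ∈ H) (hfM : ∀ B ∈ M.erase A, EdgeDisjoint f B)
    (hgM : ∀ B ∈ M.erase A, EdgeDisjoint g B) : ¬ EdgeDisjoint f g := by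
  intro hfg
  have hfM' : ∀ B ∈ insert g (M.erase A), EdgeDisjoint f B :=
    Finset.forall_mem_insert _ _ _ |>.2 ⟨hfg, hfM⟩
  have hcard := hM.card_le (((hM.isMatching.erase A).insert hg hgM).insert hf hfM')
  rw [Finset.card_insert_of_notMem (notMem_of_forall_edgeDisjoint hfM'),
    Finset.card_insert_of_notMem (notMem_of_forall_edgeDisjoint hgM)] at hcard
  have := Finset.card_erase_add_one hA
  omega

end IsOptimalMatching

theorem IsRegular.countP_vertex_eq (hreg : IsRegular H r) (A : α × β × γ) (i : Fin 3) :
    H.countP (fun e => vertex e i = vertex A i) = r := by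
  simp only [Multiset.countP_eq_card_filter]
  fin_cases i
  · simpa [vertex, deg1] using hreg.1 A.1
  · simpa [vertex, deg2] using hreg.2.1 A.2.1
  · simpa [vertex, deg3] using hreg.2.2 A.2.2

theorem IsRegular.card_eq [Fintype α] (hreg : IsRegular H r) : H.card = r * Fintype.card α := by
  have h := sum_countP_eq_sum_map_card Finset.univ (fun (a : α) (e : α × β × γ) => e.1 = a) H
  have hdeg : ∀ a, H.countP (fun e => e.1 = a) = r := fun a =>
    (Multiset.countP_eq_card_filter _ _).trans (hreg.1 a)
  simpa [hdeg, Finset.filter_eq, mul_comm r, Finset.card_univ] using h.symm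

theorem IsFanoCopy.isFanoComponent (hreg : IsRegular H (2 * s)) {x₁ y₁ : α} {x₂ y₂ : β}
    {x₃ y₃ : γ} (hF : IsFanoCopy H s x₁ y₁ x₂ y₂ x₃ y₃) :
    IsFanoComponent H s x₁ y₁ x₂ y₂ x₃ y₃ := by
  obtain ⟨h₁, h₂, h₃, hle⟩ := hF
  refine ⟨h₁, h₂, h₃, ?_⟩
  have hfull : ∀ (P : α × β × γ → Prop) [DecidablePred P], (H.filter P).card = 2 * s →
      (fanoEdges x₁ y₁ x₂ y₂ x₃ y₃).countP P = 2 →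
      ∀ e, P e → H.count e = (s • fanoEdges x₁ y₁ x₂ y₂ x₃ y₃).count e := by
    intro P _ hH hFano e he
    refine count_eq_count_of_le hle ?_ he
    rw [Multiset.countP_nsmul, hFano, Multiset.countP_eq_card_filter, hH, mul_comm]
  ext e
  rw [Multiset.count_filter]
  split_ifs with he
  · obtain ⟨d₁, d₂, d₃⟩ := hreg
    rcases he with he | he | he | he | he | he
    on_goal 1 => refine hfull _ (d₁ x₁) ?_ e he
    on_goal 2 => refine hfull _ (d₁ y₁) ?_ e he
    on_goal 3 => refine hfull _ (d₂ x₂) ?_ e he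
    on_goal 4 => refine hfull _ (d₂ y₂) ?_ e he
    on_goal 5 => refine hfull _ (d₃ x₃) ?_ e he
    on_goal 6 => refine hfull _ (d₃ y₃) ?_ e he
    all_goals simp [fanoEdges, Multiset.insert_eq_cons, ← Multiset.cons_zero, h₁, h₂, h₃,
      h₁.symm, h₂.symm, h₃.symm]
  · rw [eq_comm, Multiset.count_eq_zero]
    contrapose he
    rcases mem_fanoEdges.1 (Multiset.mem_of_mem_nsmul he) with rfl | rfl | rfl | rfl <;> simp

/-- `A` is an edge and `u` is the complementary triple of vertices of a component of `H` that is
a copy of `s • F`. The other edges of `F` take one vertex from `A` and two from `u`. -/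
def SpansFano (H : Multiset (α × β × γ)) (s : ℕ) (A u : α × β × γ) : Prop :=
  IsFanoComponent H s A.1 u.1 A.2.1 u.2.1 A.2.2 u.2.2

theorem spansFano_of_le_count (hreg : IsRegular H (2 * s)) (hAu : EdgeDisjoint A u)
    (hA : s ≤ H.count A) (hmixed : ∀ i, ∃ f, s ≤ H.count f ∧ vertex f i = vertex A i ∧
      ∀ j ≠ i, vertex f j = vertex u j) : SpansFano H s A u := by
  obtain ⟨h₁, h₂, h₃⟩ := edgeDisjoint_iff.1 hAu
  refine IsFanoCopy.isFanoComponent hreg ⟨h₁, h₂, h₃, nsmul_le_of_nodup ?_ fun e he => ?_⟩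
  · simp [fanoEdges, Multiset.insert_eq_cons, Prod.ext_iff, h₁, h₂, h₂.symm]
  have hmem : ∀ i, vertex e i = vertex A i → (∀ j ≠ i, vertex e j = vertex u j) →
      s ≤ H.count e := by
    intro i hi hj
    obtain ⟨f, hf, hfi, hfj⟩ := hmixed i
    suffices e = f from this ▸ hf
    refine vertex_injective (funext fun j => ?_)
    by_cases hji : j = i
    · rw [hji, hi, hfi]
    · rw [hj j hji, hfj j hji]
  rcases mem_fanoEdges.1 he with rfl | rfl | rfl | rfl
  · exact hA
  · exact hmem 0 rfl (by simp [Fin.forall_fin_succ, vertex])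
  · exact hmem 1 rfl (by simp [Fin.forall_fin_succ, vertex])
  · exact hmem 2 rfl (by simp [Fin.forall_fin_succ, vertex])

namespace SpansFano

theorem vertex_eq_or (h : SpansFano H s A u) (he : e ∈ H)
    (hi : vertex e i = vertex A i ∨ vertex e i = vertex u i) (j : Fin 3) :
    vertex e j = vertex A j ∨ vertex e j = vertex u j := by
  obtain ⟨-, -, -, hF⟩ := h
  have hmem : e ∈ s • fanoEdges A.1 u.1 A.2.1 u.2.1 A.2.2 u.2.2 := by
    rw [← hF, Multiset.mem_filter]
    refine ⟨he, ?_⟩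
    fin_cases i
    · exact hi.imp Sum.inl.inj fun h => .inl (Sum.inl.inj h)
    · have hi' : e.2.1 = A.2.1 ∨ e.2.1 = u.2.1 := by simpa [vertex] using hi
      tauto
    · have hi' : e.2.2 = A.2.2 ∨ e.2.2 = u.2.2 := by simpa [vertex] using hi
      tauto
  rcases mem_fanoEdges.1 (Multiset.mem_of_mem_nsmul hmem) with rfl | rfl | rfl | rfl <;>
    fin_cases j <;> simp [vertex]

theorem ne_zero (h : SpansFano H s A u) (hA : A ∈ H) : s ≠ 0 := by
  rintro rfl
  have hmem : A ∈ 0 • fanoEdges A.1 u.1 A.2.1 u.2.1 A.2.2 u.2.2 :=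
    h.2.2.2 ▸ Multiset.mem_filter.2 ⟨hA, .inl rfl⟩
  simp at hmem

theorem exists_mem (h : SpansFano H s A u) (hA : A ∈ H) (i : Fin 3) :
    ∃ e ∈ H, vertex e i = vertex u i ∧ ∃ j, vertex e j = vertex A j := by
  have hmem : ∀ e ∈ fanoEdges A.1 u.1 A.2.1 u.2.1 A.2.2 u.2.2, e ∈ H := fun e he =>
    Multiset.mem_of_mem_filter (h.2.2.2 ▸ Multiset.mem_nsmul_of_ne_zero (h.ne_zero hA) |>.2 he)
  fin_cases i
  · exact ⟨(u.1, A.2.1, u.2.2), hmem _ (by simp [fanoEdges]), rfl, 1, rfl⟩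
  · exact ⟨(A.1, u.2.1, u.2.2), hmem _ (by simp [fanoEdges]), rfl, 0, rfl⟩
  · exact ⟨(A.1, u.2.1, u.2.2), hmem _ (by simp [fanoEdges]), rfl, 0, rfl⟩

end SpansFano

/-- `u` completes the edge `A` of the matching `M` to a component that is a copy of `(r / 2) • F`
and has no further vertex covered by `M`. -/
def CompletesFano (H : Multiset (α × β × γ)) (M : Finset (α × β × γ)) (r : ℕ)
    (A u : α × β × γ) : Prop :=
  (∀ B ∈ M, EdgeDisjoint u B) ∧ ∃ s, 2 * s = r ∧ SpansFano H s A u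

theorem CompletesFano.edgeDisjoint (hM : IsMatching H M)
    (hu : CompletesFano H M r A u) (hv : CompletesFano H M r B v) (hA : A ∈ M) (hB : B ∈ M)
    (hAB : A ≠ B) : EdgeDisjoint u v := by
  obtain ⟨huM, _, -, hAu⟩ := hu
  obtain ⟨-, _, -, hBv⟩ := hv
  intro i hi
  obtain ⟨e, he, hei, j, hej⟩ := hBv.exists_mem (hM.1 B hB) i
  rcases hAu.vertex_eq_or he (.inr (hei.trans hi.symm)) j with h | h
  · exact hM.edgeDisjoint hA hB hAB j (h.symm.trans hej)
  · exact huM B hB j (h.symm.trans hej)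

theorem IsPendant.edgeDisjoint (hM : IsMatching H M) (hA : A ∈ M) (he : IsPendant M A i e) :
    ∀ B ∈ M.erase A, EdgeDisjoint e B := by
  intro B hB j
  obtain ⟨hBA, hBM⟩ := Finset.mem_erase.1 hB
  by_cases hji : j = i
  · subst hji
    rw [he.1]
    exact hM.edgeDisjoint hA hBM hBA.symm j
  · exact he.2 j hji B hBM

namespace IsOptimalMatching

/-- Otherwise `A` could be exchanged for the two disjoint edges `f` and `g`. -/
theorem vertex_eq_of_isPendant (hM : IsOptimalMatching H M) (hA : A ∈ M) (hf : f ∈ H) (hg : g ∈ H)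
    (hfi : IsPendant M A i f) (hgj : IsPendant M A j g) (hij : i ≠ j) (hki : k ≠ i)
    (hkj : k ≠ j) : vertex f k = vertex g k := by
  by_contra hk
  refine hM.not_edgeDisjoint_of_exchange hA hf hg (hfi.edgeDisjoint hM.isMatching hA)
    (hgj.edgeDisjoint hM.isMatching hA) fun l => ?_
  obtain rfl | rfl | rfl : l = i ∨ l = j ∨ l = k := by omega
  · rw [hfi.1]
    exact (hgj.2 l hij A hA).symm
  · rw [hgj.1]
    exact hfi.2 l hij.symm A hA
  · exact hk

theorem countP_isPendant_add_le (hM : IsOptimalMatching H M) (hreg : IsRegular H r)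
    (hA : A ∈ M) (hij : i ≠ j) :
    H.countP (IsPendant M A i) + H.countP (IsPendant M A j) ≤ r := by
  have hdeg : ∀ i, H.countP (IsPendant M A i) ≤ r := fun i =>
    (countP_le_countP_of_imp fun _ _ he => he.1).trans_eq (hreg.countP_vertex_eq A i)
  by_cases hi : ∃ f ∈ H, IsPendant M A i f
  swap
  · push Not at hi
    simpa [Multiset.countP_eq_zero.2 hi] using hdeg j
  by_cases hj : ∃ g ∈ H, IsPendant M A j g
  swap
  · push Not at hj
    simpa [Multiset.countP_eq_zero.2 hj] using hdeg i
  obtain ⟨f, hf, hfi⟩ := hi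
  obtain ⟨g, hg, hgj⟩ := hj
  obtain ⟨k, hki, hkj⟩ := ENat.exists_ne_ne_of_three_le (by simp) i j
  rw [← hreg.countP_vertex_eq f k]
  refine countP_add_countP_le (fun e he hei => ?_) (fun e he hej => ?_)
    fun e he => he.not_isPendant hA hij
  · exact (hM.vertex_eq_of_isPendant hA he hg hei hgj hij hki hkj).trans
      (hM.vertex_eq_of_isPendant hA hf hg hfi hgj hij hki hkj).symm
  · exact (hM.vertex_eq_of_isPendant hA hf he hfi hej hij hki hkj).symm

theorem eq_of_isPendant (hM : IsOptimalMatching H M) (hA : A ∈ M)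
    (hne : ∀ j ≠ i, ∃ g ∈ H, IsPendant M A j g) (he : e ∈ H) (hf : f ∈ H)
    (hei : IsPendant M A i e) (hfi : IsPendant M A i f) : e = f := by
  refine vertex_injective (funext fun k => ?_)
  by_cases hki : k = i
  · rw [hki, hei.1, hfi.1]
  obtain ⟨j, hjk, hji⟩ := ENat.exists_ne_ne_of_three_le (by simp) k i
  obtain ⟨g, hg, hgj⟩ := hne j hji
  exact (hM.vertex_eq_of_isPendant hA he hg hei hgj hji.symm hki hjk.symm).trans
    (hM.vertex_eq_of_isPendant hA hf hg hfi hgj hji.symm hki hjk.symm).symm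

theorem countP_isPendant_le_count (hM : IsOptimalMatching H M) (hA : A ∈ M)
    (hne : ∀ j ≠ i, ∃ g ∈ H, IsPendant M A j g) (hf : f ∈ H) (hfi : IsPendant M A i f) :
    H.countP (IsPendant M A i) ≤ H.count f :=
  countP_le_countP_of_imp fun _ he hei => hM.eq_of_isPendant hA hne hf he hfi hei

end IsOptimalMatching

/-- The number of pendant edges at the three vertices of `A`. -/
def pendantCount (H : Multiset (α × β × γ)) (M : Finset (α × β × γ)) (A : α × β × γ) : ℕ :=
  ∑ i, H.countP (IsPendant M A i)

namespace IsOptimalMatching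

theorem pendantCount_le_countP_add (hM : IsOptimalMatching H M) (hreg : IsRegular H r)
    (hA : A ∈ M) (i : Fin 3) : pendantCount H M A ≤ H.countP (IsPendant M A i) + r := by
  have h₀₁ := hM.countP_isPendant_add_le hreg hA (show (0 : Fin 3) ≠ 1 by decide)
  have h₀₂ := hM.countP_isPendant_add_le hreg hA (show (0 : Fin 3) ≠ 2 by decide)
  have h₁₂ := hM.countP_isPendant_add_le hreg hA (show (1 : Fin 3) ≠ 2 by decide)
  rw [pendantCount, Fin.sum_univ_three]
  obtain rfl | rfl | rfl : i = 0 ∨ i = 1 ∨ i = 2 := by omega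
  all_goals omega

theorem exists_isPendant (hM : IsOptimalMatching H M) (hreg : IsRegular H r) (hA : A ∈ M)
    (hlarge : H.count A + r ≤ pendantCount H M A) (i : Fin 3) : ∃ e ∈ H, IsPendant M A i e := by
  rw [← Multiset.countP_pos]
  have hpos := Multiset.count_pos.2 (hM.isMatching.1 A hA)
  have hle := hM.pendantCount_le_countP_add hreg hA i
  omega

theorem completesFano_of_forall_isPendant (hM : IsOptimalMatching H M) (hreg : IsRegular H (2 * s))
    (hA : A ∈ M) (hs : s ≤ H.count A) {f : Fin 3 → α × β × γ} (hf : ∀ i, s ≤ H.count (f i))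
    (hfH : ∀ i, f i ∈ H) (hfi : ∀ i, IsPendant M A i (f i)) :
    ∃ u, CompletesFano H M (2 * s) A u := by
  have hagree : ∀ i j k, k ≠ i → k ≠ j → vertex (f i) k = vertex (f j) k := by
    intro i j k hki hkj
    rcases eq_or_ne i j with rfl | hij
    · rfl
    · exact hM.vertex_eq_of_isPendant hA (hfH i) (hfH j) (hfi i) (hfi j) hij hki hkj
  obtain ⟨u, hu⟩ : ∃ u : α × β × γ, ∀ i, ∀ j ≠ i, vertex (f i) j = vertex u j := by
    refine ⟨((f 1).1, (f 0).2.1, (f 0).2.2), fun i j hji => ?_⟩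
    fin_cases j
    · exact hagree i 1 0 hji (by decide)
    · exact hagree i 0 1 hji (by decide)
    · exact hagree i 0 2 hji (by decide)
  have huM : ∀ B ∈ M, EdgeDisjoint u B := by
    intro B hB i
    obtain ⟨j, hji⟩ := exists_ne i
    rw [← hu j i hji.symm]
    exact (hfi j).2 i hji.symm B hB
  exact ⟨u, huM, s, rfl, spansFano_of_le_count hreg (huM A hA).symm hs fun i =>
    ⟨f i, hf i, (hfi i).1, hu i⟩⟩

theorem pendantCount_lt_or (hM : IsOptimalMatching H M) (hreg : IsRegular H r) (hA : A ∈ M) :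
    pendantCount H M A < H.count A + r ∨
      pendantCount H M A = H.count A + r ∧ ∃ u, CompletesFano H M r A u := by
  rw [or_iff_not_imp_left, not_lt]
  intro hlarge
  choose f hfH hfi using hM.exists_isPendant hreg hA hlarge
  have hcount : ∀ i, H.countP (IsPendant M A i) ≤ H.count (f i) := fun i =>
    hM.countP_isPendant_le_count hA (fun j _ => ⟨f j, hfH j, hfi j⟩) (hfH i) (hfi i)
  have hexchange : ∀ i, H.count (f i) ≤ H.count A := fun i =>
    hM.count_le_of_exchange hA (hfH i) ((hfi i).edgeDisjoint hM.isMatching hA)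
  have hle : ∀ i, H.countP (IsPendant M A i) ≤ H.count A := fun i =>
    (hcount i).trans (hexchange i)
  have hge : ∀ i, H.count A ≤ H.countP (IsPendant M A i) := fun i => by
    have := hM.pendantCount_le_countP_add hreg hA i
    omega
  have hsum : pendantCount H M A = 3 * H.count A := by
    simp [pendantCount, fun i => le_antisymm (hle i) (hge i)]
  have hbound := hM.pendantCount_le_countP_add hreg hA 0
  have h₀ := hle 0
  obtain rfl : r = 2 * H.count A := by omega
  exact ⟨by omega, hM.completesFano_of_forall_isPendant hreg hA le_rfl
    (fun i => (hge i).trans (hcount i)) hfH hfi⟩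

end IsOptimalMatching

section DoubleCounting

open Finset

theorem IsOptimalMatching.two_add_card_le (hM : IsOptimalMatching H M) (he : e ∈ H) :
    2 + #{A ∈ M | A = e} ≤ #{p ∈ M ×ˢ (univ : Finset (Fin 3)) | vertex e p.2 = vertex p.1 p.2} +
      #{p ∈ M ×ˢ (univ : Finset (Fin 3)) | IsPendant M p.1 p.2 e} := by
  by_cases heM : e ∈ M
  · have hself : #{A ∈ M | A = e} = 1 := by simp [filter_eq', heM]
    have hthree : #({e} ×ˢ (univ : Finset (Fin 3))) ≤
        #{p ∈ M ×ˢ (univ : Finset (Fin 3)) | vertex e p.2 = vertex p.1 p.2} := by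
      refine card_le_card ?_
      rintro ⟨A, i⟩ h
      obtain rfl : e = A := by simpa using h
      simp [heM]
    simp only [card_product, card_singleton, card_univ, Fintype.card_fin, one_mul] at hthree
    omega
  have hself : #{A ∈ M | A = e} = 0 := by simp [filter_eq', heM]
  obtain ⟨A, hA, i, hi⟩ := hM.exists_vertex_eq he
  have hinc : (A, i) ∈ {p ∈ M ×ˢ (univ : Finset (Fin 3)) | vertex e p.2 = vertex p.1 p.2} := by
    simp [hA, hi]
  by_cases hpen : IsPendant M A i e
  · have h₁ := card_pos.2 ⟨_, hinc⟩
    have h₂ : 0 < #{p ∈ M ×ˢ (univ : Finset (Fin 3)) | IsPendant M p.1 p.2 e} :=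
      card_pos.2 ⟨(A, i), by simp [hA, hpen]⟩
    omega
  · obtain ⟨j, hji, B, hB, hj⟩ : ∃ j ≠ i, ∃ B ∈ M, vertex e j = vertex B j := by
      simpa [IsPendant, hi] using hpen
    have htwo := one_lt_card.2 ⟨(A, i), hinc, (B, j), by simp [hB, hj], by simp [hji.symm]⟩
    omega

theorem IsOptimalMatching.two_mul_card_add_le (hM : IsOptimalMatching H M)
    (hreg : IsRegular H r) : 2 * H.card + ∑ A ∈ M, H.count A ≤
      3 * (r * #M) + ∑ A ∈ M, pendantCount H M A := by
  have hself : ∑ A ∈ M, H.count A = (H.map fun e => #{A ∈ M | A = e}).sum :=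
    sum_countP_eq_sum_map_card M (fun A e => A = e) H
  have hpen : ∑ A ∈ M, pendantCount H M A =
      (H.map fun e => #{p ∈ M ×ˢ (univ : Finset (Fin 3)) | IsPendant M p.1 p.2 e}).sum := by
    rw [← sum_countP_eq_sum_map_card]
    simp only [pendantCount, sum_product]
  have hinc : 3 * (r * #M) = (H.map fun e =>
      #{p ∈ M ×ˢ (univ : Finset (Fin 3)) | vertex e p.2 = vertex p.1 p.2}).sum := by
    rw [← sum_countP_eq_sum_map_card]
    simp only [hreg.countP_vertex_eq, sum_const, card_product, card_univ, Fintype.card_fin,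
      smul_eq_mul]
    ring
  have hcard : 2 * H.card = (H.map fun _ => 2).sum := by
    rw [Multiset.map_const', Multiset.sum_replicate, smul_eq_mul, mul_comm]
  rw [hself, hpen, hinc, hcard, ← Multiset.sum_map_add, ← Multiset.sum_map_add]
  exact Multiset.sum_map_le_sum_map _ _ fun e he => hM.two_add_card_le he

open Classical in
theorem IsOptimalMatching.two_mul_card_add_card_le (hM : IsOptimalMatching H M)
    (hreg : IsRegular H r) :
    2 * H.card + #M ≤ 4 * (r * #M) + #{A ∈ M | ∃ u, CompletesFano H M r A u} := by
  have hlocal : ∀ A ∈ M, pendantCount H M A + 1 ≤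
      H.count A + r + if ∃ u, CompletesFano H M r A u then 1 else 0 := by
    intro A hA
    rcases hM.pendantCount_lt_or hreg hA with hlt | ⟨heq, hu⟩
    · omega
    · rw [if_pos hu, heq]
  have hsum := sum_le_sum hlocal
  simp only [sum_add_distrib, sum_const, smul_eq_mul, mul_one, ← card_filter] at hsum
  have hdouble := hM.two_mul_card_add_le hreg
  rw [mul_comm (#M) r] at hsum
  omega

end DoubleCounting

/-- A family of pairwise vertex-disjoint components of `H` that are copies of `(r / 2) • F`, each
given by its six vertices in the order `x₁, y₁, x₂, y₂, x₃, y₃`. -/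
def IsFanoFamily (H : Multiset (α × β × γ)) (r : ℕ)
    (T : Finset (α × α × β × β × γ × γ)) : Prop :=
  (∀ t ∈ T, ∃ s : ℕ, 2 * s = r ∧
    IsFanoComponent H s t.1 t.2.1 t.2.2.1 t.2.2.2.1 t.2.2.2.2.1 t.2.2.2.2.2) ∧
  (∀ t ∈ T, ∀ t' ∈ T, t ≠ t' →
    ({t.1, t.2.1} : Finset α) ∩ {t'.1, t'.2.1} = ∅ ∧
    ({t.2.2.1, t.2.2.2.1} : Finset β) ∩ {t'.2.2.1, t'.2.2.2.1} = ∅ ∧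
    ({t.2.2.2.2.1, t.2.2.2.2.2} : Finset γ) ∩ {t'.2.2.2.2.1, t'.2.2.2.2.2} = ∅)

theorem IsMatching.exists_isFanoFamily (hM : IsMatching H M) {G : Finset (α × β × γ)}
    (hGM : G ⊆ M) (hG : ∀ A ∈ G, ∃ u, CompletesFano H M r A u) :
    ∃ T, IsFanoFamily H r T ∧ T.card = G.card := by
  choose! u hu using hG
  let φ : α × β × γ → α × α × β × β × γ × γ := fun A =>
    (A.1, (u A).1, A.2.1, (u A).2.1, A.2.2, (u A).2.2)
  have hφ : Function.Injective φ := fun A B h => by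
    simp only [φ, Prod.mk.injEq] at h
    exact Prod.ext h.1 (Prod.ext h.2.2.1 h.2.2.2.2.1)
  refine ⟨G.image φ, ⟨?_, ?_⟩, Finset.card_image_of_injective G hφ⟩
  · exact Finset.forall_mem_image.2 fun A hA => (hu A hA).2
  · refine Finset.forall_mem_image.2 fun A hA => Finset.forall_mem_image.2 fun B hB hne => ?_
    have hAB : A ≠ B := fun h => hne (h ▸ rfl)
    obtain ⟨a₁, a₂, a₃⟩ := edgeDisjoint_iff.1 (hM.edgeDisjoint (hGM hA) (hGM hB) hAB)
    obtain ⟨b₁, b₂, b₃⟩ := edgeDisjoint_iff.1 ((hu B hB).1 A (hGM hA)).symm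
    obtain ⟨c₁, c₂, c₃⟩ := edgeDisjoint_iff.1 ((hu A hA).1 B (hGM hB))
    obtain ⟨d₁, d₂, d₃⟩ := edgeDisjoint_iff.1
      ((hu A hA).edgeDisjoint hM (hu B hB) (hGM hA) (hGM hB) hAB)
    simp [φ, *]

theorem IsRegular.exists_isFanoFamily (hreg : IsRegular H r) :
    ∃ T, IsFanoFamily H r T ∧ 2 * H.card + matchNum H ≤ 4 * (r * matchNum H) + T.card := by
  classical
  obtain ⟨M, hM⟩ := exists_isOptimalMatching H
  obtain ⟨T, hT, hcard⟩ := hM.isMatching.exists_isFanoFamily (Finset.filter_subset _ M)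
    fun A hA => (Finset.mem_filter.1 hA).2
  exact ⟨T, hT, hcard ▸ hM.card_eq ▸ hM.two_mul_card_add_card_le hreg⟩

theorem stmt2_general [Fintype α] (hr : 1 ≤ r) {ε : ℝ} (hreg : IsRegular H r)
    (hnu : (matchNum H : ℝ) ≤ (1 + ε) * Fintype.card α / 2) :
    ∃ T, IsFanoFamily H r T ∧ (1 - (4 * (r : ℝ) - 1) * ε) * Fintype.card α / 2 ≤ T.card := by
  obtain ⟨T, hT, hcard⟩ := hreg.exists_isFanoFamily
  refine ⟨T, hT, ?_⟩
  have hcount : 2 * ((r : ℝ) * Fintype.card α) + matchNum H ≤ 4 * (r * matchNum H) + T.card := by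
    rw [hreg.card_eq] at hcard
    exact_mod_cast hcard
  have hr' : (1 : ℝ) ≤ r := by exact_mod_cast hr
  have hscaled := mul_le_mul_of_nonneg_left hnu (by linarith : (0 : ℝ) ≤ 4 * r - 1)
  linarith

end Hypergraph

/-- Stability theorem for regular 3-partite 3-graphs: if `H` is `r`-regular (`r ≥ 2`) with
`n` vertices in each class and `ν(H) ≤ (1 + ε)·n/2`, then `H` has at least
`(1 − (22r − 77/3)ε)·n/2` connected components that are copies of `(r/2) • F`. -/
theorem stmt2 {α β γ : Type*} [Fintype α] [Fintype β] [Fintype γ]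
    [DecidableEq α] [DecidableEq β] [DecidableEq γ]
    (H : Multiset (α × β × γ)) (n r : ℕ) (hr : 2 ≤ r) (ε : ℝ) (hε : 0 ≤ ε)
    (hreg : IsRegular H r)
    (hA : Fintype.card α = n) (hB : Fintype.card β = n) (hC : Fintype.card γ = n)
    (hnu : (matchNum H : ℝ) ≤ (1 + ε) * n / 2) :
    ∃ T : Finset (α × α × β × β × γ × γ),
      (∀ t ∈ T, ∃ s : ℕ, 2 * s = r ∧
        IsFanoComponent H s t.1 t.2.1 t.2.2.1 t.2.2.2.1 t.2.2.2.2.1 t.2.2.2.2.2) ∧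
      (∀ t ∈ T, ∀ t' ∈ T, t ≠ t' →
        ({t.1, t.2.1} : Finset α) ∩ {t'.1, t'.2.1} = ∅ ∧
        ({t.2.2.1, t.2.2.2.1} : Finset β) ∩ {t'.2.2.1, t'.2.2.2.1} = ∅ ∧
        ({t.2.2.2.2.1, t.2.2.2.2.2} : Finset γ) ∩ {t'.2.2.2.2.1, t'.2.2.2.2.2} = ∅) ∧
      (1 - (22 * (r : ℝ) - 77 / 3) * ε) * n / 2 ≤ (T.card : ℝ) := by
  subst hA
  obtain ⟨T, hT, hcard⟩ := stmt2_general (by omega) hreg hnu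
  refine ⟨T, hT.1, hT.2, le_trans ?_ hcard⟩
  have hr' : (2 : ℝ) ≤ r := by exact_mod_cast hr
  gcongr (1 - ?_ * ε) * _ / 2
  linarith

end Tripartite
end
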